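/- arXiv:math/9605231 — 5 statements merged into one kernel-verified Lean document; each statement's English description precedes it below -/
import Mathlib

section
/- In ℝ⁵ with the standard Euclidean inner product, let S be the set of three vectors (-2/3,4/3,-2/3,-1/2,1/2), (-2/3,1/3,1/3,-1/2,1/2), (-2/3,-2/3,4/3,-1/2,1/2). Then the minimum of ‖x‖² over x in the convex hull of S equals 7/6, and it is attained at the point β₂ = (-2/3,1/3,1/3,-1/2,1/2). -/
/-!
The weights all lie on the hyperplane `⟪β₂, y⟫ = ‖β₂‖²`, hence so does their convex hull, and
by Cauchy–Schwarz the foot `β₂` of the perpendicular from the origin is its closest point.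
-/

/-- A vector in `ℝ⁵` with the standard Euclidean inner product. -/
noncomputable def vec5 (a b c d e : ℝ) : EuclideanSpace ℝ (Fin 5) :=
  (WithLp.equiv 2 (Fin 5 → ℝ)).symm ![a, b, c, d, e]

section InnerProductSpace

variable {E : Type*} [SeminormedAddCommGroup E] [InnerProductSpace ℝ E]

theorem le_inner_of_mem_convexHull {s : Set E} {v x : E} {r : ℝ}
    (hs : ∀ y ∈ s, r ≤ inner ℝ v y) (hx : x ∈ convexHull ℝ s) : r ≤ inner ℝ v x :=
  convexHull_min hs (convex_halfSpace_ge (innerₛₗ ℝ v).isLinear r) hx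

theorem norm_le_norm_of_norm_sq_le_inner {v x : E} (h : ‖v‖ ^ 2 ≤ inner ℝ v x) : ‖v‖ ≤ ‖x‖ := by
  rcases (norm_nonneg v).eq_or_lt with hv | hv
  · exact hv ▸ norm_nonneg x
  · refine le_of_mul_le_mul_left ?_ hv
    calc ‖v‖ * ‖v‖ = ‖v‖ ^ 2 := (sq _).symm
      _ ≤ inner ℝ v x := h
      _ ≤ ‖v‖ * ‖x‖ := real_inner_le_norm v x

theorem norm_le_norm_of_mem_convexHull {s : Set E} {v x : E}
    (hs : ∀ y ∈ s, ‖v‖ ^ 2 ≤ inner ℝ v y) (hx : x ∈ convexHull ℝ s) : ‖v‖ ≤ ‖x‖ :=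
  norm_le_norm_of_norm_sq_le_inner (le_inner_of_mem_convexHull hs hx)

end InnerProductSpace

theorem inner_vec5 (a b c d e a' b' c' d' e' : ℝ) :
    inner ℝ (vec5 a b c d e) (vec5 a' b' c' d' e') =
      a * a' + b * b' + c * c' + d * d' + e * e' := by
  simp [vec5, PiLp.inner_apply, Fin.sum_univ_five, mul_comm]

theorem norm_sq_vec5 (a b c d e : ℝ) :
    ‖vec5 a b c d e‖ ^ 2 = a ^ 2 + b ^ 2 + c ^ 2 + d ^ 2 + e ^ 2 := by
  rw [← real_inner_self_eq_norm_sq, inner_vec5]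
  ring

/-- Table (2.3) for `(GL(3)×GL(2), Sym²k³⊗k²)`: the minimum of `‖x‖²` over the
convex hull of the listed weight vectors equals `7/6`, attained at
`β₂ = ((-2/3) (1/3) (1/3) (-1/2) (1/2))`. -/
theorem minsq_of_convexHull_weights :
    let S : Set (EuclideanSpace ℝ (Fin 5)) :=
      {vec5 (-2/3) (4/3) (-2/3) (-1/2) (1/2),
       vec5 (-2/3) (1/3) (1/3) (-1/2) (1/2),
       vec5 (-2/3) (-2/3) (4/3) (-1/2) (1/2)}
    let β : EuclideanSpace ℝ (Fin 5) := vec5 (-2/3) (1/3) (1/3) (-1/2) (1/2)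
    β ∈ convexHull ℝ S ∧ ‖β‖ ^ 2 = 7/6 ∧
      ∀ x ∈ convexHull ℝ S, (7/6 : ℝ) ≤ ‖x‖ ^ 2 := by
  intro S β
  have hβ : ‖β‖ ^ 2 = 7 / 6 := by
    rw [norm_sq_vec5]
    norm_num
  have hyperplane : ∀ y ∈ S, inner ℝ β y = ‖β‖ ^ 2 := by
    rw [hβ]
    rintro y (rfl | rfl | rfl) <;> rw [inner_vec5] <;> norm_num
  refine ⟨subset_convexHull ℝ S (by simp [S, β]), hβ, fun x hx ↦ ?_⟩
  have hnorm : ‖β‖ ≤ ‖x‖ :=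
    norm_le_norm_of_mem_convexHull (fun y hy ↦ (hyperplane y hy).ge) hx
  rw [← hβ]
  gcongr
end

section
/- Let q(x,y) = ax² + bxy + cy² be a nonzero binary quadratic form with complex coefficients, identified with its coefficient vector (a,b,c) ∈ ℂ³. Let SL(2,ℂ) act on such forms by (g·q)(x,y) = q((x,y)g) (linear substitution of variables). Then the following are equivalent: (i) 0 ∈ ℂ³ lies in the topological closure of the orbit {g·q : g ∈ SL(2,ℂ)} in ℂ³; (ii) b² − 4ac = 0; (iii) q = ℓ² for some linear form ℓ(x,y) = dx + ey with d, e ∈ ℂ. -/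
/-- The binary quadratic form with coefficient vector `(a, b, c) : Fin 3 → ℂ`. -/
def quadForm (a : Fin 3 → ℂ) (x y : ℂ) : ℂ :=
  a 0 * x ^ 2 + a 1 * x * y + a 2 * y ^ 2

/-!
The discriminant is invariant under `SL₂` and continuous, so it is constant on orbit closures;
as it vanishes at `0`, it vanishes on every form whose orbit closure contains `0`. If
`b² = 4ac`, choose `d² = a` and `e² = c`; then `b = ±2de`, and with the right sign of `e` the form
is `(dx + ey)²`. Finally, `SL₂` carries a nonzero linear form to `tx` for every `t ≠ 0`, so the
orbit of its square contains all `t²x²`, and these tend to `0` with `t`.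
-/

open Filter Matrix Topology

section CommRing

variable {R : Type*} [CommRing R]

/-- The binary quadratic form with coefficient vector `(a, b, c)`, over any commutative ring;
`quadForm` is the case `R = ℂ`. -/
def binaryForm (a : Fin 3 → R) (x y : R) : R :=
  a 0 * x ^ 2 + a 1 * x * y + a 2 * y ^ 2

theorem binaryForm_injective : Function.Injective (binaryForm : (Fin 3 → R) → R → R → R) := by
  intro a b h
  have h₁₀ : binaryForm a 1 0 = binaryForm b 1 0 := by rw [h]
  have h₀₁ : binaryForm a 0 1 = binaryForm b 0 1 := by rw [h]
  have h₁₁ : binaryForm a 1 1 = binaryForm b 1 1 := by rw [h]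
  simp only [binaryForm] at h₁₀ h₀₁ h₁₁
  have h₀ : a 0 = b 0 := by linear_combination h₁₀
  have h₁ : a 1 = b 1 := by linear_combination h₁₁ - h₁₀ - h₀₁
  have h₂ : a 2 = b 2 := by linear_combination h₀₁
  ext i
  fin_cases i <;> assumption

/-- The coefficient vector of the form `(x, y) ↦ q((x, y)g)`, where `q` has coefficient vector
`a`. -/
def formSubst (g : Matrix (Fin 2) (Fin 2) R) (a : Fin 3 → R) : Fin 3 → R :=
  ![binaryForm a (g 0 0) (g 0 1),
    2 * a 0 * g 0 0 * g 1 0 + a 1 * (g 0 0 * g 1 1 + g 0 1 * g 1 0) + 2 * a 2 * g 0 1 * g 1 1,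
    binaryForm a (g 1 0) (g 1 1)]

theorem binaryForm_formSubst (g : Matrix (Fin 2) (Fin 2) R) (a : Fin 3 → R) (x y : R) :
    binaryForm (formSubst g a) x y =
      binaryForm a (x * g 0 0 + y * g 1 0) (x * g 0 1 + y * g 1 1) := by
  simp only [formSubst, binaryForm, cons_val]
  ring

theorem discrim_formSubst (g : Matrix (Fin 2) (Fin 2) R) (a : Fin 3 → R) :
    discrim (formSubst g a 0) (formSubst g a 1) (formSubst g a 2) =
      g.det ^ 2 * discrim (a 0) (a 1) (a 2) := by
  simp only [formSubst, binaryForm, discrim, det_fin_two, cons_val]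
  ring

/-- The orbit of the form with coefficient vector `a` under `SL(2, R)`, as a set of coefficient
vectors; the group acts by linear substitution, `(g · q)(x, y) = q((x, y)g)`. -/
def slOrbit (a : Fin 3 → R) : Set (Fin 3 → R) :=
  {b | ∃ g : SpecialLinearGroup (Fin 2) R, ∀ x y : R,
    binaryForm b x y =
      binaryForm a (x * (g : Matrix (Fin 2) (Fin 2) R) 0 0 +
                     y * (g : Matrix (Fin 2) (Fin 2) R) 1 0)
                   (x * (g : Matrix (Fin 2) (Fin 2) R) 0 1 +
                     y * (g : Matrix (Fin 2) (Fin 2) R) 1 1)}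

theorem mem_slOrbit_iff {a b : Fin 3 → R} :
    b ∈ slOrbit a ↔ ∃ g : SpecialLinearGroup (Fin 2) R, b = formSubst g.1 a := by
  refine exists_congr fun g => ?_
  simp only [← binaryForm_formSubst, ← binaryForm_injective.eq_iff, funext_iff]

theorem self_mem_slOrbit (a : Fin 3 → R) : a ∈ slOrbit a :=
  ⟨1, fun x y => by simp⟩

theorem discrim_eq_of_mem_slOrbit {a b : Fin 3 → R} (hb : b ∈ slOrbit a) :
    discrim (b 0) (b 1) (b 2) = discrim (a 0) (a 1) (a 2) := by
  obtain ⟨g, rfl⟩ := mem_slOrbit_iff.mp hb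
  rw [discrim_formSubst, g.det_coe, one_pow, one_mul]

theorem discrim_eq_of_mem_closure_slOrbit [TopologicalSpace R] [IsTopologicalRing R] [T1Space R]
    {a b : Fin 3 → R} (hb : b ∈ closure (slOrbit a)) :
    discrim (b 0) (b 1) (b 2) = discrim (a 0) (a 1) (a 2) := by
  have hcont : Continuous fun c : Fin 3 → R => discrim (c 0) (c 1) (c 2) := by
    unfold discrim
    fun_prop
  exact closure_minimal (fun _ => discrim_eq_of_mem_slOrbit)
    (isClosed_singleton.preimage hcont) hb

theorem binaryForm_eq_sq_iff {a : Fin 3 → R} {d e : R} :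
    (∀ x y, binaryForm a x y = (d * x + e * y) ^ 2) ↔ a = ![d ^ 2, 2 * d * e, e ^ 2] := by
  have hsq (x y : R) : binaryForm ![d ^ 2, 2 * d * e, e ^ 2] x y = (d * x + e * y) ^ 2 := by
    simp only [binaryForm, cons_val]
    ring
  simp only [← hsq, ← binaryForm_injective.eq_iff, funext_iff]

theorem discrim_eq_zero_iff_exists_sq [NoZeroDivisors R] (hR : ∀ z : R, IsSquare z)
    (a : Fin 3 → R) :
    discrim (a 0) (a 1) (a 2) = 0 ↔
      ∃ d e : R, ∀ x y, binaryForm a x y = (d * x + e * y) ^ 2 := by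
  simp only [binaryForm_eq_sq_iff]
  constructor
  · intro h
    obtain ⟨d, hd⟩ := (hR (a 0)).exists_sq
    obtain ⟨e, he⟩ := (hR (a 2)).exists_sq
    have hmid : a 1 ^ 2 = (2 * d * e) ^ 2 := by
      rw [discrim, hd, he] at h
      linear_combination h
    rcases sq_eq_sq_iff_eq_or_eq_neg.mp hmid with hpos | hneg
    · refine ⟨d, e, ?_⟩
      ext i
      fin_cases i <;> simp [hd, he, hpos]
    · refine ⟨d, -e, ?_⟩
      ext i
      fin_cases i <;> simp [hd, he, hneg]
  · rintro ⟨d, e, rfl⟩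
    simp only [discrim, cons_val]
    ring

theorem exists_SL2_mulVec_eq_of_isCoprime {d e : R} (h : IsCoprime d e) (t : Rˣ) :
    ∃ g : SpecialLinearGroup (Fin 2) R, g.1 *ᵥ ![d, e] = ![(t : R), 0] := by
  obtain ⟨p, q, hpq⟩ := h
  refine ⟨⟨!![t * p, t * q; -(↑t⁻¹ * e), ↑t⁻¹ * d], ?_⟩, ?_⟩
  · rw [det_fin_two_of]
    linear_combination (t * ↑t⁻¹ : R) * hpq + t.mul_inv
  · have hfst : t * p * d + t * q * e = (t : R) := by linear_combination (t : R) * hpq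
    have hsnd : -(↑t⁻¹ * e * d) + ↑t⁻¹ * d * e = 0 := by ring
    ext i
    fin_cases i <;> simp [mulVec, dotProduct, hfst, hsnd]

theorem unit_sq_mem_slOrbit {a : Fin 3 → R} {d e : R} (hde : IsCoprime d e)
    (ha : ∀ x y, binaryForm a x y = (d * x + e * y) ^ 2) (t : Rˣ) :
    ![(t : R) ^ 2, 0, 0] ∈ slOrbit a := by
  obtain ⟨g, hg⟩ := exists_SL2_mulVec_eq_of_isCoprime hde t
  have hrow₀ : g.1 0 0 * d + g.1 0 1 * e = t := by
    simpa [mulVec, dotProduct] using congrFun hg 0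
  have hrow₁ : g.1 1 0 * d + g.1 1 1 * e = 0 := by
    simpa [mulVec, dotProduct] using congrFun hg 1
  refine ⟨g, fun x y => ?_⟩
  have hlin : d * (x * g.1 0 0 + y * g.1 1 0) + e * (x * g.1 0 1 + y * g.1 1 1) = t * x := by
    linear_combination x * hrow₀ + y * hrow₁
  rw [ha, hlin]
  simp only [binaryForm, cons_val]
  ring

end CommRing

section TopologicalField

variable {K : Type*} [Field K] [TopologicalSpace K] [IsTopologicalRing K] [(𝓝[≠] (0 : K)).NeBot]

theorem zero_mem_closure_slOrbit_of_eq_sq {a : Fin 3 → K} {d e : K}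
    (ha : ∀ x y, binaryForm a x y = (d * x + e * y) ^ 2) :
    0 ∈ closure (slOrbit a) := by
  have hzero : (![0, 0, 0] : Fin 3 → K) = 0 := by
    ext i
    fin_cases i <;> rfl
  by_cases hde : d = 0 ∧ e = 0
  · obtain ⟨rfl, rfl⟩ := hde
    have ha₀ : a = 0 := by simpa [hzero] using binaryForm_eq_sq_iff.mp ha
    exact subset_closure (ha₀ ▸ self_mem_slOrbit a)
  · have hcop : IsCoprime d e :=
      isCoprime_of_dvd d e hde fun z hz hz₀ => (hz (isUnit_iff_ne_zero.mpr hz₀)).elim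
    have hlim : Tendsto (fun t : K => ![t ^ 2, 0, 0]) (𝓝[≠] 0) (𝓝 0) := by
      have hcont : Continuous fun t : K => ![t ^ 2, 0, 0] := by fun_prop
      simpa [hzero] using (hcont.tendsto 0).mono_left nhdsWithin_le_nhds
    refine mem_closure_of_tendsto hlim ?_
    filter_upwards [self_mem_nhdsWithin] with t ht
    exact unit_sq_mem_slOrbit hcop ha (Units.mk0 t ht)

theorem binary_quadratic_null_cone_general [T1Space K] (hK : ∀ z : K, IsSquare z)
    (a : Fin 3 → K) :
    (0 ∈ closure (slOrbit a) ↔ discrim (a 0) (a 1) (a 2) = 0) ∧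
    (discrim (a 0) (a 1) (a 2) = 0 ↔
      ∃ d e : K, ∀ x y, binaryForm a x y = (d * x + e * y) ^ 2) := by
  have hsq := discrim_eq_zero_iff_exists_sq hK a
  refine ⟨⟨fun h => ?_, fun h => ?_⟩, hsq⟩
  · simpa [discrim] using (discrim_eq_of_mem_closure_slOrbit h).symm
  · obtain ⟨d, e, hde⟩ := hsq.mp h
    exact zero_mem_closure_slOrbit_of_eq_sq hde

end TopologicalField

/-- For a nonzero binary quadratic form `q = ax² + bxy + cy²` over `ℂ` with the
`SL(2,ℂ)`-action `(g·q)(x,y) = q((x,y)g)`, the following are equivalent: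
(i) `0` lies in the closure of the orbit of `q`; (ii) `b² − 4ac = 0`;
(iii) `q` is the square of a linear form. -/
theorem binary_quadratic_null_cone (a : Fin 3 → ℂ) (ha : a ≠ 0) :
    ((0 : Fin 3 → ℂ) ∈ closure {b : Fin 3 → ℂ |
        ∃ g : Matrix.SpecialLinearGroup (Fin 2) ℂ, ∀ x y : ℂ,
          quadForm b x y =
            quadForm a (x * (g : Matrix (Fin 2) (Fin 2) ℂ) 0 0 +
                         y * (g : Matrix (Fin 2) (Fin 2) ℂ) 1 0)
                       (x * (g : Matrix (Fin 2) (Fin 2) ℂ) 0 1 +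
                         y * (g : Matrix (Fin 2) (Fin 2) ℂ) 1 1)} ↔
      a 1 ^ 2 - 4 * a 0 * a 2 = 0) ∧
    (a 1 ^ 2 - 4 * a 0 * a 2 = 0 ↔
      ∃ d e : ℂ, ∀ x y : ℂ, quadForm a x y = (d * x + e * y) ^ 2) :=
  binary_quadratic_null_cone_general IsAlgClosed.exists_eq_mul_self a
end

section
/- Let n ≥ 1 and let A be a nonzero symmetric n×n matrix over ℂ. Then 0 lies in the topological closure (in the space of n×n complex matrices) of the set {gᵀ A g : g ∈ SL(n,ℂ)} if and only if det A = 0. -/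
open Matrix

/-!
The determinant is continuous and constant on the orbit, so it vanishes at `A` if the orbit
accumulates at `0`. Conversely, a singular symmetric `A` has a nonzero vector `v` in its radical.
Choose a covector `w` with `w v = 1`. The element of `SL` scaling `ker w` by `t` and `v` by
`t ^ (1 - n)` multiplies the form by `t ^ 2`, because the form does not see `v`. Let `t → 0`.
-/

open Filter Topology

section CommRing

variable {m n R : Type*} [Fintype n] [DecidableEq n] [CommRing R]

/-- The orbit of the bilinear form with matrix `A` under changes of basis of determinant one. -/
def slCongruenceOrbit (A : Matrix n n R) : Set (Matrix n n R) :=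
  {B | ∃ g : SpecialLinearGroup n R, B = (g : Matrix n n R)ᵀ * A * (g : Matrix n n R)}

theorem det_eq_of_mem_slCongruenceOrbit {A B : Matrix n n R} (hB : B ∈ slCongruenceOrbit A) :
    B.det = A.det := by
  obtain ⟨g, rfl⟩ := hB
  simp

theorem det_eq_of_mem_closure_slCongruenceOrbit [TopologicalSpace R] [IsTopologicalRing R]
    [T1Space R] {A B : Matrix n n R} (hB : B ∈ closure (slCongruenceOrbit A)) :
    B.det = A.det := by
  have isClosed_fiber : IsClosed (det ⁻¹' {A.det} : Set (Matrix n n R)) :=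
    isClosed_singleton.preimage continuous_id.matrix_det
  exact closure_minimal (fun _ ↦ det_eq_of_mem_slCongruenceOrbit) isClosed_fiber hB

theorem det_one_add_sub_one_smul_vecMulVec {v w : n → R} (hwv : w ⬝ᵥ v = 1) (c : R) :
    (1 + (c - 1) • vecMulVec v w).det = c := by
  rw [← smul_vecMulVec, vecMulVec_eq Unit, det_one_add_replicateCol_mul_replicateRow,
    dotProduct_smul, hwv, smul_eq_mul, mul_one, add_sub_cancel]

/-- The transformation of determinant one that scales the hyperplane `w ⬝ᵥ x = 0` by `t` and the
complementary vector `v` by `t ^ (1 - card n)`; as `t → 0` it contracts every form whose radical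
contains `v`. It is encoded as `t` times the dilation that fixes the hyperplane and multiplies `v`
by `t ^ (-card n)`, with `t` a unit so that the inverse power makes sense over a ring. -/
def hyperplaneScaling {v w : n → R} (hwv : w ⬝ᵥ v = 1) (t : Rˣ) : SpecialLinearGroup n R :=
  ⟨(t : R) • (1 + (((t ^ Fintype.card n)⁻¹ : Rˣ) - 1 : R) • vecMulVec v w), by
    rw [det_smul, det_one_add_sub_one_smul_vecMulVec hwv, ← Units.val_pow_eq_pow_val,
      Units.mul_inv]⟩

theorem mul_hyperplaneScaling_of_mulVec_eq_zero {v w : n → R} (hwv : w ⬝ᵥ v = 1) (t : Rˣ)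
    {A : Matrix m n R} (hAv : A *ᵥ v = 0) :
    A * (hyperplaneScaling hwv t : Matrix n n R) = (t : R) • A := by
  have mul_vecMulVec_eq_zero : A * vecMulVec v w = 0 := by
    rw [mul_vecMulVec, hAv, zero_vecMulVec]
  rw [hyperplaneScaling, Matrix.mul_smul, Matrix.mul_add, Matrix.mul_one, Matrix.mul_smul,
    mul_vecMulVec_eq_zero, smul_zero, add_zero]

theorem transpose_hyperplaneScaling_mul_of_vecMul_eq_zero {v w : n → R} (hwv : w ⬝ᵥ v = 1)
    (t : Rˣ) {A : Matrix n m R} (hvA : v ᵥ* A = 0) :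
    (hyperplaneScaling hwv t : Matrix n n R)ᵀ * A = (t : R) • A := by
  have hAv : Aᵀ *ᵥ v = 0 := by rwa [mulVec_transpose]
  simpa using congrArg transpose (mul_hyperplaneScaling_of_mulVec_eq_zero hwv t hAv)

theorem sq_smul_mem_slCongruenceOrbit {A : Matrix n n R} {v w : n → R} (hwv : w ⬝ᵥ v = 1)
    (hAv : A *ᵥ v = 0) (hvA : v ᵥ* A = 0) (t : Rˣ) :
    (t : R) ^ 2 • A ∈ slCongruenceOrbit A :=
  ⟨hyperplaneScaling hwv t, by
    rw [transpose_hyperplaneScaling_mul_of_vecMul_eq_zero hwv t hvA, smul_mul_assoc,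
      mul_hyperplaneScaling_of_mulVec_eq_zero hwv t hAv, smul_smul, pow_two]⟩

end CommRing

section Field

variable {n K : Type*} [Fintype n]

theorem exists_dotProduct_eq_one [DivisionSemiring K] {v : n → K} (hv : v ≠ 0) :
    ∃ w : n → K, w ⬝ᵥ v = 1 := by
  classical
  obtain ⟨i, hi⟩ := Function.ne_iff.mp hv
  exact ⟨Pi.single i (v i)⁻¹, by rw [single_dotProduct, inv_mul_cancel₀ hi]⟩

variable [DecidableEq n] [Field K] [TopologicalSpace K] [IsTopologicalRing K]
  [(𝓝[≠] (0 : K)).NeBot]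

theorem zero_mem_closure_slCongruenceOrbit {A : Matrix n n K} {v : n → K} (hv : v ≠ 0)
    (hAv : A *ᵥ v = 0) (hvA : v ᵥ* A = 0) : 0 ∈ closure (slCongruenceOrbit A) := by
  obtain ⟨w, hwv⟩ := exists_dotProduct_eq_one hv
  have contraction : Tendsto (fun t : K ↦ t ^ 2 • A) (𝓝[≠] 0) (𝓝 0) := by
    have continuous_contraction : Continuous fun t : K ↦ t ^ 2 • A := by fun_prop
    exact (continuous_contraction.tendsto' 0 0 (by simp)).mono_left nhdsWithin_le_nhds
  refine mem_closure_of_tendsto contraction ?_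
  filter_upwards [self_mem_nhdsWithin] with t ht
  exact sq_smul_mem_slCongruenceOrbit hwv hAv hvA (Units.mk0 t ht)

theorem symmetric_matrix_null_cone_general [T1Space K] [Nonempty n] {A : Matrix n n K}
    (hA : ∀ v, A *ᵥ v = 0 → v ᵥ* A = 0) :
    0 ∈ closure (slCongruenceOrbit A) ↔ A.det = 0 := by
  refine ⟨fun h ↦ ?_, fun h ↦ ?_⟩
  · rw [← det_eq_of_mem_closure_slCongruenceOrbit h, det_zero]
  · obtain ⟨v, hv, hAv⟩ := exists_mulVec_eq_zero_iff.mpr h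
    exact zero_mem_closure_slCongruenceOrbit hv hAv (hA v hAv)

end Field

/-- A nonzero symmetric `n×n` complex matrix `A` has `0` in the closure of
`{gᵀ A g : g ∈ SL(n,ℂ)}` if and only if `det A = 0`. -/
theorem symmetric_matrix_null_cone (n : ℕ) (hn : 1 ≤ n)
    (A : Matrix (Fin n) (Fin n) ℂ) (hA : A.IsSymm) (hA0 : A ≠ 0) :
    (0 : Matrix (Fin n) (Fin n) ℂ) ∈
        closure {B : Matrix (Fin n) (Fin n) ℂ |
          ∃ g : Matrix.SpecialLinearGroup (Fin n) ℂ,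
            B = (g : Matrix (Fin n) (Fin n) ℂ)ᵀ * A * (g : Matrix (Fin n) (Fin n) ℂ)} ↔
      A.det = 0 :=
  have : Nonempty (Fin n) := ⟨⟨0, hn⟩⟩
  symmetric_matrix_null_cone_general fun v hAv ↦ by rwa [← mulVec_transpose, hA.eq]
end

section
/- Let p be a prime, let μ be the additive Haar measure on ℚ_p normalized so that μ(ℤ_p) = 1, and let s, s₁ be real numbers with s > 0 and s + s₁ > 1. Then (1 − p^{−1})^{−1} · ∫_{ℚ_p × ℚ_p} 1_{ℤ_p}(t) · 1_{ℤ_p}(t·u) · ‖t‖^{s−1} · (max(1, ‖u‖))^{−s₁} d(μ×μ)(t,u) = (1 − p^{−(s+s₁)}) / ((1 − p^{−s}) · (1 − p^{−(s+s₁−1)})), where ‖·‖ denotes the p-adic absolute value. -/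
open MeasureTheory

/-!
Only the norms of `t` and `u` enter the integrand, so everything reduces to the measures of the
spheres `‖x‖ = q ^ n`, which follow from the scaling `μ (c • A) = ‖c‖ * μ A`. Writing
`M = max 1 ‖u‖`, the conditions `‖t‖ ≤ 1` and `‖t * u‖ ≤ 1` say together that `‖t‖ ≤ M⁻¹`, so the
`t`-integral is a geometric series equal to a constant times `M ^ (-s)`; the remaining `u`-integral
of `M ^ (-(s + s₁))` is `1` on the unit ball plus another geometric series.
-/

open Metric
open scoped ENNReal Pointwise

lemma zpow_rpow_sub_one_mul_zpow {x : ℝ} (hx : 0 < x) (n : ℤ) (s : ℝ) :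
    (x ^ n) ^ (s - 1) * x ^ n = (x ^ s) ^ n := by
  rw [← Real.rpow_add_one (zpow_pos hx n).ne', sub_add_cancel, Real.rpow_zpow_comm hx.le]

lemma tsum_ofReal_mul_pow {a r : ℝ} (ha : 0 ≤ a) (hr₀ : 0 ≤ r) (hr₁ : r < 1) :
    ∑' k : ℕ, ENNReal.ofReal (a * r ^ k) = ENNReal.ofReal (a / (1 - r)) := by
  have hsum := (hasSum_geometric_of_lt_one hr₀ hr₁).mul_left a
  rw [← ENNReal.ofReal_tsum_of_nonneg (fun k => by positivity) hsum.summable, hsum.tsum_eq,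
    div_eq_mul_inv]

lemma relIndex_mul_measure {G : Type*} [AddGroup G] [MeasurableSpace G] [MeasurableAdd G]
    (μ : Measure G) [μ.IsAddLeftInvariant] {H L : AddSubgroup G} (hHL : H ≤ L)
    (hrel : H.relIndex L ≠ 0) (hH : MeasurableSet (H : Set G)) (hL : MeasurableSet (L : Set G)) :
    H.relIndex L * μ H = μ L := by
  have hemb : MeasurableEmbedding L.subtype := .subtype_coe hL
  have : MeasurableAdd L :=
    { measurable_const_add := fun c => (measurable_subtype_coe.const_add (c : G)).subtype_mk
      measurable_add_const := fun c => (measurable_subtype_coe.add_const (c : G)).subtype_mk }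
  have : (μ.comap L.subtype).IsAddLeftInvariant := .comap μ hemb
  have : (H.addSubgroupOf L).FiniteIndex := ⟨hrel⟩
  have hcount := (H.addSubgroupOf L).index_mul_measure (hH.preimage hemb.measurable)
    (μ.comap L.subtype)
  rw [hemb.comap_apply, hemb.comap_apply, ← AddSubgroup.coe_map,
    AddSubgroup.map_addSubgroupOf_eq_of_le hHL, AddSubgroup.coe_subtype, Set.image_univ,
    Subtype.range_coe] at hcount
  exact hcount

/-- The norm of `K` is the normalized absolute value of a nonarchimedean local field with residue
field of `q` elements: its value group is `q ^ ℤ`, and the maximal ideal (the open unit ball) has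
index `q` in the ring of integers (the closed unit ball). -/
structure HasNormalizedNorm (K : Type*) [NormedField K] [IsUltrametricDist K] (q : ℕ) : Prop where
  one_lt : 1 < q
  exists_norm_eq_zpow {x : K} : x ≠ 0 → ∃ n : ℤ, ‖x‖ = (q : ℝ) ^ n
  exists_norm_eq_inv : ∃ ϖ : K, ‖ϖ‖ = (q : ℝ)⁻¹
  relIndex_ball :
    (IsUltrametricDist.ball_openAddSubgroup K one_pos).toAddSubgroup.relIndex
      (IsUltrametricDist.closedBall_openAddSubgroup K one_pos).toAddSubgroup = q

namespace HasNormalizedNorm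

section Norm

variable {K : Type*} [NormedField K] [IsUltrametricDist K] {q : ℕ} (hq : HasNormalizedNorm K q)

include hq

lemma one_lt_cast : (1 : ℝ) < q := by exact_mod_cast hq.one_lt

lemma cast_pos : (0 : ℝ) < q := one_pos.trans hq.one_lt_cast

lemma one_sub_inv_pos : 0 < 1 - (q : ℝ)⁻¹ := sub_pos.2 (inv_lt_one_of_one_lt₀ hq.one_lt_cast)

lemma ball_zpow (n : ℤ) : ball (0 : K) ((q : ℝ) ^ n) = closedBall 0 ((q : ℝ) ^ (n - 1)) := by
  ext x
  rw [mem_ball_zero_iff, mem_closedBall_zero_iff]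
  obtain rfl | hx := eq_or_ne x 0
  · have := hq.cast_pos
    simp only [norm_zero]
    exact iff_of_true (by positivity) (by positivity)
  · obtain ⟨m, hm⟩ := hq.exists_norm_eq_zpow hx
    rw [hm, zpow_lt_zpow_iff_right₀ hq.one_lt_cast, zpow_le_zpow_iff_right₀ hq.one_lt_cast,
      Int.le_sub_one_iff]

lemma exists_max_one_norm_eq_zpow (x : K) : ∃ n : ℤ, max 1 ‖x‖ = (q : ℝ) ^ n := by
  rcases le_or_gt ‖x‖ 1 with hx | hx
  · exact ⟨0, by rw [max_eq_left hx, zpow_zero]⟩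
  · rw [max_eq_right hx.le]
    exact hq.exists_norm_eq_zpow (norm_pos_iff.1 (one_pos.trans hx))

lemma closedBall_zpow_sdiff_zero (n : ℤ) :
    closedBall (0 : K) ((q : ℝ) ^ n) \ {0} = ⋃ k : ℕ, sphere 0 ((q : ℝ) ^ (n - k)) := by
  ext x
  simp only [Set.mem_sdiff, mem_closedBall_zero_iff, Set.mem_singleton_iff, Set.mem_iUnion,
    mem_sphere_zero_iff_norm]
  constructor
  · rintro ⟨hle, hx⟩
    obtain ⟨m, hm⟩ := hq.exists_norm_eq_zpow hx
    rw [hm, zpow_le_zpow_iff_right₀ hq.one_lt_cast] at hle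
    exact ⟨(n - m).toNat, by rw [hm, Int.toNat_of_nonneg (by lia), sub_sub_cancel]⟩
  · rintro ⟨k, hk⟩
    refine ⟨hk.trans_le (zpow_le_zpow_right₀ hq.one_lt_cast.le (by lia)), norm_pos_iff.1 ?_⟩
    exact hk ▸ zpow_pos hq.cast_pos _

lemma compl_closedBall_zpow (n : ℤ) :
    (closedBall (0 : K) ((q : ℝ) ^ n))ᶜ = ⋃ k : ℕ, sphere 0 ((q : ℝ) ^ (n + 1 + k)) := by
  ext x
  simp only [Set.mem_compl_iff, mem_closedBall_zero_iff, not_le, Set.mem_iUnion,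
    mem_sphere_zero_iff_norm]
  constructor
  · intro hlt
    obtain ⟨m, hm⟩ := hq.exists_norm_eq_zpow (norm_pos_iff.1 ((zpow_pos hq.cast_pos n).trans hlt))
    rw [hm, zpow_lt_zpow_iff_right₀ hq.one_lt_cast] at hlt
    exact ⟨(m - (n + 1)).toNat, by rw [hm, Int.toNat_of_nonneg (by lia), add_sub_cancel]⟩
  · rintro ⟨k, hk⟩
    exact hk ▸ zpow_lt_zpow_right₀ hq.one_lt_cast (by lia)

lemma rpow_neg_lt_one {s : ℝ} (hs : 0 < s) : (q : ℝ) ^ (-s) < 1 :=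
  Real.rpow_lt_one_of_one_lt_of_neg hq.one_lt_cast (neg_neg_of_pos hs)

lemma measure_closedBall_inv [MeasurableSpace K] [BorelSpace K] (μ : Measure K)
    [μ.IsAddLeftInvariant] :
    μ (closedBall 0 (q : ℝ)⁻¹) = (q : ℝ≥0∞)⁻¹ * μ (closedBall 0 1) := by
  have hq₀ : (q : ℝ≥0∞) ≠ 0 := by exact_mod_cast (one_pos.trans hq.one_lt).ne'
  have hball : ball (0 : K) 1 = closedBall 0 (q : ℝ)⁻¹ := by simpa using hq.ball_zpow 0
  have hindex := relIndex_mul_measure μ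
    (H := (IsUltrametricDist.ball_openAddSubgroup K one_pos).toAddSubgroup)
    (L := (IsUltrametricDist.closedBall_openAddSubgroup K one_pos).toAddSubgroup)
    ball_subset_closedBall (by rw [hq.relIndex_ball]; exact (one_pos.trans hq.one_lt).ne')
    measurableSet_ball measurableSet_closedBall
  rw [hq.relIndex_ball] at hindex
  change q * μ (ball 0 1) = μ (closedBall 0 1) at hindex
  rw [← hball, ← hindex, ENNReal.inv_mul_cancel_left hq₀ (ENNReal.natCast_ne_top q)]

end Norm

section Haar

variable {K : Type*} [NontriviallyNormedField K] [IsUltrametricDist K] [ProperSpace K]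
  [MeasurableSpace K] [BorelSpace K] {q : ℕ} (hq : HasNormalizedNorm K q)

include hq

lemma distribHaarChar_of_norm_eq_inv {ϖ : Kˣ} (hϖ : ‖(ϖ : K)‖ = (q : ℝ)⁻¹) :
    distribHaarChar K ϖ = (q : NNReal)⁻¹ := by
  have hq₀ : (q : NNReal) ≠ 0 := by exact_mod_cast (one_pos.trans hq.one_lt).ne'
  refine distribHaarChar_eq_of_measure_smul_eq_mul (μ := Measure.addHaar) (s := closedBall 0 1)
    (measure_closedBall_pos _ _ one_pos).ne' measure_closedBall_lt_top.ne ?_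
  rw [show ϖ • closedBall (0 : K) 1 = (ϖ : K) • closedBall 0 1 from rfl, smul_unitClosedBall, hϖ,
    hq.measure_closedBall_inv, ENNReal.coe_inv hq₀, ENNReal.coe_natCast]

variable (μ : Measure K) [μ.IsAddHaarMeasure] (hμ : μ (closedBall 0 1) = 1)

include hμ

lemma measure_closedBall_zpow (n : ℤ) :
    μ (closedBall 0 ((q : ℝ) ^ n)) = ENNReal.ofReal ((q : ℝ) ^ n) := by
  obtain ⟨ϖ, hϖ⟩ := hq.exists_norm_eq_inv
  have hϖ₀ : ϖ ≠ 0 := norm_pos_iff.1 (hϖ ▸ inv_pos.2 hq.cast_pos)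
  let c : Kˣ := Units.mk0 ϖ hϖ₀ ^ (-n)
  have hc : ‖(c : K)‖ = (q : ℝ) ^ n := by simp [c, hϖ]
  have hchar : distribHaarChar K c = (q : NNReal) ^ n := by
    rw [map_zpow, hq.distribHaarChar_of_norm_eq_inv hϖ, inv_zpow', neg_neg]
  calc μ (closedBall 0 ((q : ℝ) ^ n)) = μ (c • closedBall 0 1) := by
        rw [← hc, ← smul_unitClosedBall]; rfl
    _ = distribHaarChar K c := by rw [← distribHaarChar_mul, hμ, mul_one]
    _ = ENNReal.ofReal ((q : ℝ) ^ n) := by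
        rw [hchar, ENNReal.ofReal, Real.toNNReal_zpow (Nat.cast_nonneg q), Real.toNNReal_natCast]

lemma measure_sphere_zpow (n : ℤ) :
    μ (sphere 0 ((q : ℝ) ^ n)) = ENNReal.ofReal ((1 - (q : ℝ)⁻¹) * (q : ℝ) ^ n) := by
  have hpos := zpow_pos hq.cast_pos (n - 1)
  rw [← closedBall_sdiff_ball, measure_sdiff ball_subset_closedBall
    measurableSet_ball.nullMeasurableSet (by simp [hq.ball_zpow, hq.measure_closedBall_zpow μ hμ]),
    hq.ball_zpow, hq.measure_closedBall_zpow μ hμ, hq.measure_closedBall_zpow μ hμ,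
    ← ENNReal.ofReal_sub _ hpos.le, zpow_sub_one₀ hq.cast_pos.ne']
  congr 1
  ring

lemma lintegral_sphere_norm_rpow (n : ℤ) (s : ℝ) :
    ∫⁻ x in sphere 0 ((q : ℝ) ^ n), ENNReal.ofReal (‖x‖ ^ (s - 1)) ∂μ =
      ENNReal.ofReal ((1 - (q : ℝ)⁻¹) * ((q : ℝ) ^ s) ^ n) := by
  have hpos := zpow_pos hq.cast_pos n
  have hconst : Set.EqOn (fun x : K => ENNReal.ofReal (‖x‖ ^ (s - 1)))
      (fun _ => ENNReal.ofReal (((q : ℝ) ^ n) ^ (s - 1))) (sphere 0 ((q : ℝ) ^ n)) :=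
    fun x hx => by simp only [mem_sphere_zero_iff_norm.1 hx]
  rw [setLIntegral_congr_fun isClosed_sphere.measurableSet hconst, setLIntegral_const,
    hq.measure_sphere_zpow μ hμ, ← ENNReal.ofReal_mul (by positivity), mul_left_comm,
    zpow_rpow_sub_one_mul_zpow hq.cast_pos]

lemma lintegral_iUnion_sphere_norm_rpow {e : ℕ → ℤ} (he : e.Injective) (s : ℝ) :
    ∫⁻ x in ⋃ k, sphere 0 ((q : ℝ) ^ e k), ENNReal.ofReal (‖x‖ ^ (s - 1)) ∂μ =
      ∑' k, ENNReal.ofReal ((1 - (q : ℝ)⁻¹) * ((q : ℝ) ^ s) ^ e k) := by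
  have hdisj : Pairwise (Function.onFun Disjoint fun k => sphere (0 : K) ((q : ℝ) ^ e k)) := by
    refine fun i j hij => Set.disjoint_left.2 fun x hi hj => hij (he ?_)
    rw [mem_sphere_zero_iff_norm] at hi hj
    exact zpow_right_injective₀ hq.cast_pos hq.one_lt_cast.ne' (hi.symm.trans hj)
  rw [lintegral_iUnion (fun _ => isClosed_sphere.measurableSet) hdisj]
  simp only [hq.lintegral_sphere_norm_rpow μ hμ]

lemma lintegral_closedBall_norm_rpow {s : ℝ} (hs : 0 < s) (n : ℤ) :
    ∫⁻ x in closedBall 0 ((q : ℝ) ^ n), ENNReal.ofReal (‖x‖ ^ (s - 1)) ∂μ =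
      ENNReal.ofReal ((1 - (q : ℝ)⁻¹) * ((q : ℝ) ^ n) ^ s / (1 - (q : ℝ) ^ (-s))) := by
  have hq₀ := hq.cast_pos
  have hinv := hq.one_sub_inv_pos
  have hterm (k : ℕ) : (1 - (q : ℝ)⁻¹) * ((q : ℝ) ^ s) ^ (n - k) =
      (1 - (q : ℝ)⁻¹) * ((q : ℝ) ^ n) ^ s * ((q : ℝ) ^ (-s)) ^ k := by
    rw [zpow_sub₀ (by positivity), zpow_natCast, Real.rpow_neg hq₀.le,
      ← Real.rpow_zpow_comm hq₀.le, inv_pow, div_eq_mul_inv, mul_assoc]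
  rw [← setLIntegral_congr (sdiff_null_ae_eq_self (measure_singleton (0 : K))),
    hq.closedBall_zpow_sdiff_zero,
    hq.lintegral_iUnion_sphere_norm_rpow μ hμ fun i j h => by simpa using h]
  simp only [hterm]
  exact tsum_ofReal_mul_pow (by positivity) (by positivity) (hq.rpow_neg_lt_one hs)

lemma lintegral_compl_closedBall_norm_rpow {s : ℝ} (hs : s < 0) (n : ℤ) :
    ∫⁻ x in (closedBall 0 ((q : ℝ) ^ n))ᶜ, ENNReal.ofReal (‖x‖ ^ (s - 1)) ∂μ =
      ENNReal.ofReal ((1 - (q : ℝ)⁻¹) * ((q : ℝ) ^ (n + 1)) ^ s / (1 - (q : ℝ) ^ s)) := by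
  have hq₀ := hq.cast_pos
  have hinv := hq.one_sub_inv_pos
  have hterm (k : ℕ) : (1 - (q : ℝ)⁻¹) * ((q : ℝ) ^ s) ^ (n + 1 + k) =
      (1 - (q : ℝ)⁻¹) * ((q : ℝ) ^ (n + 1)) ^ s * ((q : ℝ) ^ s) ^ k := by
    rw [zpow_add₀ (by positivity), zpow_natCast, ← Real.rpow_zpow_comm hq₀.le, mul_assoc]
  rw [hq.compl_closedBall_zpow,
    hq.lintegral_iUnion_sphere_norm_rpow μ hμ fun i j h => by simpa using h]
  simp only [hterm]
  exact tsum_ofReal_mul_pow (by positivity) (by positivity)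
    (Real.rpow_lt_one_of_one_lt_of_neg hq.one_lt_cast hs)

lemma lintegral_max_one_norm_rpow_neg {w : ℝ} (hw : 1 < w) :
    ∫⁻ x, ENNReal.ofReal (max 1 ‖x‖ ^ (-w)) ∂μ =
      ENNReal.ofReal ((1 - (q : ℝ) ^ (-w)) / (1 - (q : ℝ) ^ (-(w - 1)))) := by
  have hq₀ := hq.cast_pos
  have hinv := hq.one_sub_inv_pos
  have hden : 0 < 1 - (q : ℝ) ^ (-(w - 1)) := sub_pos.2 (hq.rpow_neg_lt_one (sub_pos.2 hw))
  have hunit : ∫⁻ x in closedBall 0 1, ENNReal.ofReal (max 1 ‖x‖ ^ (-w)) ∂μ = 1 := by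
    have hone : Set.EqOn (fun x : K => ENNReal.ofReal (max 1 ‖x‖ ^ (-w))) 1 (closedBall 0 1) :=
      fun x hx => by simp [max_eq_left (mem_closedBall_zero_iff.1 hx)]
    rw [setLIntegral_congr_fun measurableSet_closedBall hone]
    simpa using hμ
  have htail : ∫⁻ x in (closedBall 0 1)ᶜ, ENNReal.ofReal (max 1 ‖x‖ ^ (-w)) ∂μ =
      ENNReal.ofReal
        ((1 - (q : ℝ)⁻¹) * (q : ℝ) ^ (-(w - 1)) / (1 - (q : ℝ) ^ (-(w - 1)))) := by
    have hmax : Set.EqOn (fun x : K => ENNReal.ofReal (max 1 ‖x‖ ^ (-w)))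
        (fun x => ENNReal.ofReal (‖x‖ ^ (-(w - 1) - 1))) (closedBall 0 1)ᶜ := by
      intro x hx
      have hx : 1 < ‖x‖ := by simpa using hx
      simp only [max_eq_right hx.le, neg_sub', sub_neg_eq_add, add_sub_cancel_right]
    rw [setLIntegral_congr_fun measurableSet_closedBall.compl hmax]
    simpa using hq.lintegral_compl_closedBall_norm_rpow μ hμ (neg_neg_of_pos (sub_pos.2 hw)) 0
  rw [← lintegral_add_compl _ measurableSet_closedBall, hunit, htail, ← ENNReal.ofReal_one,
    ← ENNReal.ofReal_add zero_le_one (by positivity)]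
  congr 1
  have hshift : (q : ℝ) ^ (-w) = (q : ℝ)⁻¹ * (q : ℝ) ^ (-(w - 1)) := by
    rw [← Real.rpow_neg_one, ← Real.rpow_add hq₀]
    congr 1
    ring
  rw [hshift]
  field_simp
  ring

end Haar

end HasNormalizedNorm

/-- The integrand of the local adjusting integral `T_v(Ψ_v, 1, s, s₁)` for `Ψ_v` the characteristic
function of `o_v²`, with respect to `dt du`; passing from `d×t` to `dt` lowers the exponent of `‖t‖`
to `s - 1`. -/
noncomputable def adjustingIntegrand {K : Type*} [NormedField K] (s s₁ : ℝ) (t u : K) : ℝ :=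
  (if ‖t‖ ≤ 1 then (1 : ℝ) else 0) * (if ‖t * u‖ ≤ 1 then (1 : ℝ) else 0) *
    ‖t‖ ^ (s - 1) * (max 1 ‖u‖) ^ (-s₁)

section adjustingIntegrand

variable {K : Type*} [NormedField K] (s s₁ : ℝ)

lemma adjustingIntegrand_nonneg (t u : K) : 0 ≤ adjustingIntegrand s s₁ t u := by
  unfold adjustingIntegrand
  positivity

lemma measurable_adjustingIntegrand [MeasurableSpace K] [BorelSpace K]
    [SecondCountableTopology K] :
    Measurable fun tu : K × K => adjustingIntegrand s s₁ tu.1 tu.2 := by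
  have hfst : MeasurableSet {tu : K × K | ‖tu.1‖ ≤ 1} :=
    measurableSet_le (by fun_prop) measurable_const
  have hmul : MeasurableSet {tu : K × K | ‖tu.1 * tu.2‖ ≤ 1} :=
    measurableSet_le (by fun_prop) measurable_const
  exact (((measurable_const.ite hfst measurable_const).mul
    (measurable_const.ite hmul measurable_const)).mul (by fun_prop)).mul (by fun_prop)

lemma adjustingIntegrand_eq_indicator (t u : K) :
    adjustingIntegrand s s₁ t u =
      (closedBall 0 (max 1 ‖u‖)⁻¹).indicator (fun t => ‖t‖ ^ (s - 1)) t * max 1 ‖u‖ ^ (-s₁) := by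
  have hM : 0 < max 1 ‖u‖ := lt_max_of_lt_left one_pos
  have hmem : t ∈ closedBall 0 (max 1 ‖u‖)⁻¹ ↔ ‖t‖ ≤ 1 ∧ ‖t * u‖ ≤ 1 := by
    rw [mem_closedBall_zero_iff, inv_eq_one_div, le_div_iff₀ hM,
      mul_max_of_nonneg _ _ (norm_nonneg t), max_le_iff, mul_one, norm_mul]
  by_cases h : ‖t‖ ≤ 1 ∧ ‖t * u‖ ≤ 1
  · rw [Set.indicator_of_mem (hmem.2 h), adjustingIntegrand, if_pos h.1, if_pos h.2, one_mul,
      one_mul]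
  · rw [Set.indicator_of_notMem (hmem.not.2 h), adjustingIntegrand]
    rcases not_and_or.1 h with h | h <;> simp only [if_neg h, zero_mul, mul_zero]

end adjustingIntegrand

namespace HasNormalizedNorm

variable {K : Type*} [NontriviallyNormedField K] [IsUltrametricDist K] [ProperSpace K]
  [MeasurableSpace K] [BorelSpace K] {q : ℕ} (hq : HasNormalizedNorm K q)
  (μ : Measure K) [μ.IsAddHaarMeasure] (hμ : μ (closedBall 0 1) = 1)

include hq hμ

lemma lintegral_adjustingIntegrand_left {s : ℝ} (hs : 0 < s) (s₁ : ℝ) (u : K) :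
    ∫⁻ t, ENNReal.ofReal (adjustingIntegrand s s₁ t u) ∂μ =
      ENNReal.ofReal ((1 - (q : ℝ)⁻¹) / (1 - (q : ℝ) ^ (-s))) *
        ENNReal.ofReal (max 1 ‖u‖ ^ (-(s + s₁))) := by
  have hM : 0 < max 1 ‖u‖ := lt_max_of_lt_left one_pos
  have hinv := hq.one_sub_inv_pos
  have hden : 0 < 1 - (q : ℝ) ^ (-s) := sub_pos.2 (hq.rpow_neg_lt_one hs)
  obtain ⟨n, hn⟩ := hq.exists_max_one_norm_eq_zpow u
  have hofReal (t : K) : ENNReal.ofReal (adjustingIntegrand s s₁ t u) =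
      (closedBall 0 ((q : ℝ) ^ (-n))).indicator (fun t => ENNReal.ofReal (‖t‖ ^ (s - 1))) t *
        ENNReal.ofReal (max 1 ‖u‖ ^ (-s₁)) := by
    rw [adjustingIntegrand_eq_indicator, ENNReal.ofReal_mul' (by positivity), zpow_neg, ← hn]
    congr 1
    exact (congrFun (Set.indicator_comp_of_zero (g := ENNReal.ofReal) ENNReal.ofReal_zero) t).symm
  have hradius : ((q : ℝ) ^ (-n)) ^ s = max 1 ‖u‖ ^ (-s) := by
    rw [zpow_neg, ← hn, Real.inv_rpow hM.le, Real.rpow_neg hM.le]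
  simp only [hofReal]
  rw [lintegral_mul_const' _ _ ENNReal.ofReal_ne_top, lintegral_indicator measurableSet_closedBall,
    hq.lintegral_closedBall_norm_rpow μ hμ hs, hradius, ← ENNReal.ofReal_mul (by positivity),
    ← ENNReal.ofReal_mul (by positivity), neg_add, Real.rpow_add hM]
  congr 1
  ring

lemma lintegral_adjustingIntegrand {s s₁ : ℝ} (hs : 0 < s) (hss₁ : 1 < s + s₁) :
    ∫⁻ tu : K × K, ENNReal.ofReal (adjustingIntegrand s s₁ tu.1 tu.2) ∂(μ.prod μ) =
      ENNReal.ofReal ((1 - (q : ℝ)⁻¹) / (1 - (q : ℝ) ^ (-s)) *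
        ((1 - (q : ℝ) ^ (-(s + s₁))) / (1 - (q : ℝ) ^ (-(s + s₁ - 1))))) := by
  have hinv := hq.one_sub_inv_pos
  have hden : 0 < 1 - (q : ℝ) ^ (-s) := sub_pos.2 (hq.rpow_neg_lt_one hs)
  rw [lintegral_prod_symm' _ (measurable_adjustingIntegrand s s₁).ennreal_ofReal]
  simp only [hq.lintegral_adjustingIntegrand_left μ hμ hs]
  rw [lintegral_const_mul' _ _ ENNReal.ofReal_ne_top, hq.lintegral_max_one_norm_rpow_neg μ hμ hss₁,
    ← ENNReal.ofReal_mul (by positivity)]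

end HasNormalizedNorm

theorem padic_local_adjusting_integral_general {K : Type*} [NontriviallyNormedField K]
    [IsUltrametricDist K] [ProperSpace K] [MeasurableSpace K] [BorelSpace K] {q : ℕ}
    (hq : HasNormalizedNorm K q) (μ : Measure K) [μ.IsAddHaarMeasure]
    (hμ : μ (closedBall 0 1) = 1) {s s₁ : ℝ} (hs : 0 < s) (hss₁ : 1 < s + s₁) :
    (1 - (q : ℝ)⁻¹)⁻¹ *
      ∫ tu : K × K, adjustingIntegrand s s₁ tu.1 tu.2 ∂(μ.prod μ) =
      (1 - (q : ℝ) ^ (-(s + s₁))) /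
        ((1 - (q : ℝ) ^ (-s)) * (1 - (q : ℝ) ^ (-(s + s₁ - 1)))) := by
  have hinv := hq.one_sub_inv_pos
  have hs_den : 0 < 1 - (q : ℝ) ^ (-s) := sub_pos.2 (hq.rpow_neg_lt_one hs)
  have hnum : 0 < 1 - (q : ℝ) ^ (-(s + s₁)) := sub_pos.2 (hq.rpow_neg_lt_one (by linarith))
  have hden : 0 < 1 - (q : ℝ) ^ (-(s + s₁ - 1)) := sub_pos.2 (hq.rpow_neg_lt_one (by linarith))
  have hnonneg : 0 ≤ᵐ[μ.prod μ] fun tu : K × K => adjustingIntegrand s s₁ tu.1 tu.2 :=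
    .of_forall fun tu => adjustingIntegrand_nonneg s s₁ tu.1 tu.2
  have hmeas : AEStronglyMeasurable (fun tu : K × K => adjustingIntegrand s s₁ tu.1 tu.2)
      (μ.prod μ) := (measurable_adjustingIntegrand s s₁).aestronglyMeasurable
  rw [integral_eq_lintegral_of_nonneg_ae hnonneg hmeas,
    hq.lintegral_adjustingIntegrand μ hμ hs hss₁, ENNReal.toReal_ofReal (by positivity),
    div_mul_div_comm, mul_div_assoc, inv_mul_cancel_left₀ hinv.ne']

section Padic

variable (p : ℕ) [Fact p.Prime]

lemma relIndex_ball_padic :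
    (IsUltrametricDist.ball_openAddSubgroup ℚ_[p] one_pos).toAddSubgroup.relIndex
      (IsUltrametricDist.closedBall_openAddSubgroup ℚ_[p] one_pos).toAddSubgroup = p := by
  set B := (IsUltrametricDist.ball_openAddSubgroup ℚ_[p] one_pos).toAddSubgroup
  set C := (IsUltrametricDist.closedBall_openAddSubgroup ℚ_[p] one_pos).toAddSubgroup
  let toInt : C ≃+ ℤ_[p] :=
    { toFun := fun x => ⟨x, mem_closedBall_zero_iff.1 x.2⟩
      invFun := fun x => ⟨x, mem_closedBall_zero_iff.2 x.2⟩
      map_add' := fun _ _ => rfl }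
  let residue : C →+ ZMod p := (PadicInt.toZMod (p := p)).toAddMonoidHom.comp toInt.toAddMonoidHom
  have hsurj : Function.Surjective residue :=
    (ZMod.ringHom_surjective PadicInt.toZMod).comp toInt.surjective
  have hker : residue.ker = B.addSubgroupOf C := by
    ext x
    change PadicInt.toZMod (toInt x) = 0 ↔ (x : ℚ_[p]) ∈ ball 0 1
    rw [← RingHom.mem_ker, PadicInt.ker_toZMod, IsLocalRing.mem_maximalIdeal, PadicInt.mem_nonunits,
      mem_ball_zero_iff]
    rfl
  rw [AddSubgroup.relIndex, ← hker, AddSubgroup.index_ker, AddMonoidHom.range_eq_top.2 hsurj,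
    AddSubgroup.card_top, Nat.card_zmod]

lemma hasNormalizedNorm_padic : HasNormalizedNorm ℚ_[p] p where
  one_lt := (Fact.out : p.Prime).one_lt
  exists_norm_eq_zpow hx := ⟨_, Padic.norm_eq_zpow_neg_valuation hx⟩
  exists_norm_eq_inv := ⟨p, Padic.norm_p⟩
  relIndex_ball := relIndex_ball_padic p

end Padic

/-- The local adjusting integral for `ℚ_p`: for the additive Haar measure `μ`
normalized by `μ(ℤ_p) = 1`, and real `s > 0`, `s + s₁ > 1`,
`(1 − p⁻¹)⁻¹ ∫ 1_{ℤ_p}(t) 1_{ℤ_p}(tu) ‖t‖^{s−1} max(1,‖u‖)^{−s₁} dμ(t)dμ(u)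
  = (1 − p^{−(s+s₁)}) / ((1 − p^{−s})(1 − p^{−(s+s₁−1)}))`. -/
theorem padic_local_adjusting_integral (p : ℕ) [Fact p.Prime]
    [MeasurableSpace ℚ_[p]] [BorelSpace ℚ_[p]]
    (μ : Measure ℚ_[p]) [μ.IsAddHaarMeasure]
    (hμ : μ {x : ℚ_[p] | ‖x‖ ≤ 1} = 1)
    (s s₁ : ℝ) (hs : 0 < s) (hss₁ : 1 < s + s₁) :
    (1 - (p : ℝ)⁻¹)⁻¹ *
      ∫ tu : ℚ_[p] × ℚ_[p],
        (if ‖tu.1‖ ≤ 1 then (1 : ℝ) else 0) *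
        (if ‖tu.1 * tu.2‖ ≤ 1 then (1 : ℝ) else 0) *
        ‖tu.1‖ ^ (s - 1) * (max 1 ‖tu.2‖) ^ (-s₁) ∂(μ.prod μ) =
      (1 - (p : ℝ) ^ (-(s + s₁))) /
        ((1 - (p : ℝ) ^ (-s)) * (1 - (p : ℝ) ^ (-(s + s₁ - 1)))) := by
  have hball : μ (closedBall 0 1) = 1 := by simpa only [closedBall, dist_zero_right] using hμ
  exact padic_local_adjusting_integral_general (hasNormalizedNorm_padic p) μ hball hs hss₁
end

section
/- Let n, N ≥ 1, let γ₁, …, γ_N ∈ ℤⁿ, and let the torus (ℂ^×)ⁿ act on ℂ^N by (t • x)_i = (∏_{j=1}^n t_j^{γ_i(j)}) · x_i. Let x ∈ ℂ^N with x ≠ 0. Then 0 lies in the topological closure of the orbit {t • x : t ∈ (ℂ^×)ⁿ} in ℂ^N if and only if the origin of ℝⁿ does NOT belong to the convex hull (in ℝⁿ) of the finite set {γ_i : x_i ≠ 0}. -/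
/-!
If `0 = ∑ cᵢ γᵢ` is a convex combination of the weights on the support of `x`, then no torus element
can shrink all the coordinates `xᵢ`, `i` in the support, at once: the vectors `γᵢ` pair with
`(log ‖tⱼ‖)ⱼ` to `log ‖(t • x)ᵢ‖ - log ‖xᵢ‖`, and a linear functional is nonnegative at some point
of any set whose convex hull contains `0`. So the orbit avoids a neighbourhood of `0`.
Otherwise Hahn-Banach gives a real vector pairing positively with the finitely many weights; this
is an open and scale-invariant condition, so an integral vector satisfies it as well, and the
one-parameter subgroup with these exponents drives `x` to `0`.
-/

open Filter Function Topology

section IntegralSeparation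

theorem tendsto_intFloor_mul_div_atTop {R : Type*} [TopologicalSpace R] [Field R] [LinearOrder R]
    [IsStrictOrderedRing R] [OrderTopology R] [FloorRing R] (a : R) :
    Tendsto (fun x : R ↦ (⌊a * x⌋ : R) / x) atTop (𝓝 a) := by
  have hfract : Tendsto (fun x : R ↦ Int.fract (a * x) / x) atTop (𝓝 0) :=
    tendsto_bdd_div_atTop_nhds_zero (.of_forall fun x ↦ Int.fract_nonneg (a * x))
      (.of_forall fun x ↦ (Int.fract_lt_one (a * x)).le) tendsto_id
  have hsub : Tendsto (fun x : R ↦ a - Int.fract (a * x) / x) atTop (𝓝 a) := by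
    simpa using tendsto_const_nhds.sub hfract
  refine hsub.congr' ?_
  filter_upwards [eventually_ne_atTop 0] with x hx
  rw [← Int.self_sub_fract, sub_div, mul_div_cancel_right₀ a hx]

variable {ι κ : Type*} [Fintype κ]

theorem exists_dotProduct_pos_of_zero_notMem_convexHull {s : Set (κ → ℝ)}
    (hs : IsClosed (convexHull ℝ s)) (h0 : 0 ∉ convexHull ℝ s) :
    ∃ w : κ → ℝ, ∀ a ∈ s, 0 < a ⬝ᵥ w := by
  classical
  obtain ⟨f, u, hu, hf⟩ := geometric_hahn_banach_point_closed (convex_convexHull ℝ s) hs h0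
  obtain ⟨w, hw⟩ := (dotProductEquiv ℝ κ).surjective f.toLinearMap
  refine ⟨w, fun a ha ↦ ?_⟩
  calc
    0 < f a := ((map_zero f).symm.trans_lt hu).trans (hf a (subset_convexHull ℝ s ha))
    _ = a ⬝ᵥ w := by rw [dotProduct_comm]; exact (LinearMap.congr_fun hw a).symm

theorem exists_int_dotProduct_pos {s : Set (κ → ℝ)} (hs : s.Finite) {w : κ → ℝ}
    (hw : ∀ a ∈ s, 0 < a ⬝ᵥ w) :
    ∃ m : κ → ℤ, ∀ a ∈ s, 0 < a ⬝ᵥ fun j ↦ (m j : ℝ) := by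
  have hlim (a : κ → ℝ) :
      Tendsto (fun r : ℝ ↦ a ⬝ᵥ fun j ↦ (⌊w j * r⌋ : ℝ) / r) atTop (𝓝 (a ⬝ᵥ w)) :=
    tendsto_finsetSum _ fun j _ ↦ (tendsto_intFloor_mul_div_atTop (w j)).const_mul (a j)
  have hpos : ∀ᶠ r : ℝ in atTop, ∀ a ∈ s, 0 < a ⬝ᵥ fun j ↦ (⌊w j * r⌋ : ℝ) / r :=
    (eventually_all_finite hs).2 fun a ha ↦ (hlim a).eventually_const_lt (hw a ha)
  obtain ⟨r, hr, hr0⟩ := (hpos.and (eventually_gt_atTop 0)).exists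
  refine ⟨fun j ↦ ⌊w j * r⌋, fun a ha ↦ ?_⟩
  have hdiv : (a ⬝ᵥ fun j ↦ (⌊w j * r⌋ : ℝ) / r) = (a ⬝ᵥ fun j ↦ (⌊w j * r⌋ : ℝ)) / r := by
    simp only [dotProduct, Finset.sum_div, mul_div_assoc]
  exact (div_pos_iff_of_pos_right hr0).1 (hdiv ▸ hr a ha)

theorem exists_int_dotProduct_pos_of_zero_notMem_convexHull {γ : ι → κ → ℤ} {I : Set ι}
    (hI : I.Finite) (h0 : 0 ∉ convexHull ℝ ((fun i j ↦ (γ i j : ℝ)) '' I)) :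
    ∃ m : κ → ℤ, ∀ i ∈ I, 0 < γ i ⬝ᵥ m := by
  have hfin := hI.image fun i j ↦ (γ i j : ℝ)
  obtain ⟨w, hw⟩ :=
    exists_dotProduct_pos_of_zero_notMem_convexHull (hfin.isClosed_convexHull ℝ) h0
  obtain ⟨m, hm⟩ := exists_int_dotProduct_pos hfin hw
  refine ⟨m, fun i hi ↦ ?_⟩
  have hi' : 0 < ∑ j, (γ i j : ℝ) * m j := hm _ (Set.mem_image_of_mem _ hi)
  exact_mod_cast hi'

end IntegralSeparation

section Torus

variable {ι κ : Type*}

/-- The one-parameter subgroup `α ↦ (α ^ m j)ⱼ` of the split torus `κ → G` with exponents `m`. -/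
def torusCocharacter {G : Type*} [CommGroup G] (m : κ → ℤ) : G →* (κ → G) where
  toFun α j := α ^ m j
  map_one' := by ext; simp
  map_mul' α β := by ext; simp [mul_zpow]

variable [Fintype κ]

/-- The character `t ↦ ∏ j, t j ^ a j` of the split torus `κ → G` with weight `a`. -/
def torusCharacter {G : Type*} [CommGroup G] (a : κ → ℤ) : (κ → G) →* G where
  toFun t := ∏ j, t j ^ a j
  map_one' := by simp
  map_mul' s t := by simp [mul_zpow, Finset.prod_mul_distrib]

/-- The diagonal action of the split torus `κ → Mˣ` on `ι → M`, the coordinate `i` having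
weight `γ i`. -/
def torusAct {M : Type*} [CommMonoid M] (γ : ι → κ → ℤ) (t : κ → Mˣ) (x : ι → M) : ι → M :=
  fun i ↦ ((torusCharacter (γ i) t : Mˣ) : M) * x i

/-- The orbit of `x` under the diagonal action of the torus `κ → Mˣ` with weights `γ`. -/
def torusOrbit {M : Type*} [CommMonoid M] (γ : ι → κ → ℤ) (x : ι → M) : Set (ι → M) :=
  {y | ∃ t : κ → Mˣ, y = torusAct γ t x}

theorem torusCharacter_torusCocharacter {G : Type*} [CommGroup G] (a m : κ → ℤ) (α : G) :
    torusCharacter a (torusCocharacter m α) = α ^ (a ⬝ᵥ m) := by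
  -- Powers in `G` are scalar multiples in the `ℤ`-module `Additive G`.
  have hsum : α ^ ∑ j, a j * m j = ∏ j, α ^ (a j * m j) :=
    Finset.sum_smul (f := fun j ↦ a j * m j) (x := Additive.ofMul α)
  simp only [torusCharacter, torusCocharacter, MonoidHom.coe_mk, OneHom.coe_mk, dotProduct, hsum,
    zpow_mul']

theorem tendsto_torusAct_torusCocharacter {M : Type*} [CommMonoidWithZero M] [TopologicalSpace M]
    [ContinuousMul M] {γ : ι → κ → ℤ} {m : κ → ℤ} {x : ι → M}
    (hm : ∀ i ∈ support x, 0 < γ i ⬝ᵥ m) :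
    Tendsto (fun α : Mˣ ↦ torusAct γ (torusCocharacter m α) x) (comap Units.val (𝓝 0)) (𝓝 0) := by
  refine tendsto_pi_nhds.2 fun i ↦ ?_
  simp only [torusAct, torusCharacter_torusCocharacter, Pi.zero_apply]
  by_cases hi : x i = 0
  · simpa only [hi, mul_zero] using tendsto_const_nhds
  · obtain ⟨k, hk⟩ := Int.eq_ofNat_of_zero_le (hm i hi).le
    have hk0 : k ≠ 0 := by have := hm i hi; lia
    simp only [hk, zpow_natCast, Units.val_pow_eq_pow_val]
    have hpow : Tendsto (fun α : Mˣ ↦ (α : M) ^ k) (comap Units.val (𝓝 0)) (𝓝 0) := by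
      simpa only [zero_pow hk0] using (tendsto_comap (f := Units.val) (x := 𝓝 (0 : M))).pow k
    simpa only [zero_mul] using hpow.mul_const (x i)

theorem comap_unitsVal_nhds_zero_neBot (M : Type*) [GroupWithZero M] [TopologicalSpace M]
    [(𝓝[≠] (0 : M)).NeBot] : (comap (Units.val : Mˣ → M) (𝓝 0)).NeBot := by
  have hdense : DenseRange (Units.val : Mˣ → M) :=
    (dense_compl_singleton 0).mono fun a ha ↦ ⟨Units.mk0 a ha, rfl⟩
  exact comap_neBot_iff_frequently.2 (mem_closure_iff_frequently.1 (hdense 0))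

section NormedField

variable {𝕜 : Type*} [NormedField 𝕜]

theorem log_norm_torusCharacter (a : κ → ℤ) (t : κ → 𝕜ˣ) :
    Real.log ‖((torusCharacter a t : 𝕜ˣ) : 𝕜)‖ =
      (fun j ↦ Real.log ‖(t j : 𝕜)‖) ⬝ᵥ fun j ↦ (a j : ℝ) := by
  simp [torusCharacter, dotProduct, Units.coe_prod, norm_prod, Real.log_prod, zpow_ne_zero,
    mul_comm]

theorem exists_one_le_norm_torusCharacter {γ : ι → κ → ℤ} {I : Set ι}
    (h0 : 0 ∈ convexHull ℝ ((fun i j ↦ (γ i j : ℝ)) '' I)) (t : κ → 𝕜ˣ) :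
    ∃ i ∈ I, 1 ≤ ‖((torusCharacter (γ i) t : 𝕜ˣ) : 𝕜)‖ := by
  classical
  obtain ⟨_, ⟨i, hi, rfl⟩, hlog⟩ :=
    ((dotProductEquiv ℝ κ fun j ↦ Real.log ‖(t j : 𝕜)‖).convexOn convex_univ
      ).exists_ge_of_mem_convexHull (Set.subset_univ _) h0
  refine ⟨i, hi, (Real.log_nonneg_iff (norm_pos_iff.2 (Units.ne_zero _))).1 ?_⟩
  simpa [log_norm_torusCharacter] using hlog

theorem zero_notMem_closure_torusOrbit {γ : ι → κ → ℤ} {x : ι → 𝕜} (hx : (support x).Finite)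
    (h0 : 0 ∈ convexHull ℝ ((fun i j ↦ (γ i j : ℝ)) '' support x)) :
    0 ∉ closure (torusOrbit γ x) := by
  let C : Set (ι → 𝕜) := ⋃ i ∈ support x, {y | ‖x i‖ ≤ ‖y i‖}
  have hC : IsClosed C := hx.isClosed_biUnion fun i _ ↦
    isClosed_le continuous_const (continuous_apply i).norm
  have horbit : torusOrbit γ x ⊆ C := by
    rintro _ ⟨t, rfl⟩
    obtain ⟨i, hi, hnorm⟩ := exists_one_le_norm_torusCharacter h0 t
    refine Set.mem_biUnion hi ?_
    simpa [torusAct] using le_mul_of_one_le_left (norm_nonneg (x i)) hnorm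
  have hzero : (0 : ι → 𝕜) ∉ C := by simp [C]
  exact fun h ↦ hzero (closure_minimal horbit hC h)

end NormedField

theorem torus_instability_general {𝕜 : Type*} [NontriviallyNormedField 𝕜] (γ : ι → κ → ℤ)
    {x : ι → 𝕜} (hx : (support x).Finite) :
    [0 ∈ closure (torusOrbit γ x),
      0 ∉ convexHull ℝ ((fun i j ↦ (γ i j : ℝ)) '' support x),
      ∃ m : κ → ℤ, Tendsto (fun α : 𝕜ˣ ↦ torusAct γ (torusCocharacter m α) x)
        (comap Units.val (𝓝 0)) (𝓝 0)].TFAE := by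
  tfae_have 1 → 2 := fun hcl hhull ↦ zero_notMem_closure_torusOrbit hx hhull hcl
  tfae_have 2 → 3 := fun hhull ↦
    (exists_int_dotProduct_pos_of_zero_notMem_convexHull hx hhull).imp
      fun _ ↦ tendsto_torusAct_torusCocharacter
  tfae_have 3 → 1 := by
    rintro ⟨m, hm⟩
    have := comap_unitsVal_nhds_zero_neBot 𝕜
    exact mem_closure_of_tendsto hm (.of_forall fun α ↦ ⟨torusCocharacter m α, rfl⟩)
  tfae_finish

end Torus

/-- Torus instability criterion: for the action of `(ℂ^×)ⁿ` on `ℂ^N` with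
integer weights `γ₁, …, γ_N`, a nonzero point `x` has `0` in the closure of its
torus orbit iff the origin is *not* in the convex hull of the weights `γ_i`
with `x_i ≠ 0`. -/
theorem torus_instability (n N : ℕ) (hn : 1 ≤ n) (hN : 1 ≤ N)
    (γ : Fin N → Fin n → ℤ) (x : Fin N → ℂ) (hx : x ≠ 0) :
    (0 : Fin N → ℂ) ∈ closure {y : Fin N → ℂ |
        ∃ t : Fin n → ℂˣ, y = fun i => ((∏ j : Fin n, t j ^ γ i j : ℂˣ) : ℂ) * x i} ↔
      (0 : Fin n → ℝ) ∉
        convexHull ℝ ((fun i => fun j => (γ i j : ℝ)) '' {i : Fin N | x i ≠ 0}) :=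
  ((torus_instability_general γ (Set.toFinite (support x))).out 0 1 :)
end
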